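/- arXiv:2102.00308 — 3 statements merged into one kernel-verified Lean document; each statement's English description precedes it below -/
import Mathlib

section
/- Let m, r be integers with m ≥ 1 and 0 ≤ r ≤ m(q−1). Then the dimension of RM_q(r,m) over F_q equals Σ_{s=0}^{r} Σ_{i=0}^{m} (−1)^i · C(m,i) · C(s−iq+m−1, s−iq), with the convention that a term is 0 whenever s − iq < 0. -/
/-!
Evaluation on `F^m` is injective on polynomials of degree at most `q - 1` in each variable, so
`RM_q(r,m)` has the dimension of `V_q(r,m)` (`finrank_RM_eq`). The latter has a basis of monomials,
indexed by the exponent vectors with entries less than `q` and sum at most `r`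
(`finrank_Vq_eq`). The number of such vectors with sum exactly `s` is the coefficient of `X^s` in
`(1 + X + ⋯ + X^(q-1))^m` (`card_boundedExponents`). As a power series this is
`(1 - X^q)^m * (1 - X)^(-m)`, and expanding both factors by the binomial theorem gives the inner
alternating sum (`coeff_geom_pow`).
-/

open MvPolynomial Finset

noncomputable section

/-- `V_q(r,m)`: polynomials of total degree at most `r` with degree at most
`q - 1` in each variable, where `q` is the cardinality of the (finite) field. -/
def Vq (F : Type) [Field F] [Fintype F] (r m : ℕ) : Submodule F (MvPolynomial (Fin m) F) :=
  MvPolynomial.restrictTotalDegree (Fin m) F r ⊓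
    MvPolynomial.restrictDegree (Fin m) F (Fintype.card F - 1)

/-- The evaluation map `f ↦ (f(P))_{P ∈ F^m}`. -/
def Ev (F : Type) [Field F] [Fintype F] (m : ℕ) :
    MvPolynomial (Fin m) F →ₗ[F] ((Fin m → F) → F) where
  toFun f := fun a => eval a f
  map_add' f g := by funext a; simp
  map_smul' c f := by funext a; simp

/-- The generalized Reed–Muller code `RM_q(r,m)`, as a subspace of `F^{F^m}`. -/
def RM (F : Type) [Field F] [Fintype F] (r m : ℕ) : Submodule F ((Fin m → F) → F) :=
  (Vq F r m).map (Ev F m)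

/-- Hamming weight of a vector. -/
def wt {ι β : Type*} [Zero β] (c : ι → β) : ℕ := Set.ncard (Function.support c)

/-- Minimum distance of a code. -/
def minDist {F : Type} [Field F] [Fintype F] {m : ℕ}
    (C : Submodule F ((Fin m → F) → F)) : ℕ :=
  sInf {w | ∃ c ∈ C, c ≠ 0 ∧ wt c = w}

/-- The exponent vectors in `m` variables with all entries less than `q` and total degree `s`. -/
def boundedExponents (m q s : ℕ) : Finset (Fin m →₀ ℕ) :=
  (finsuppAntidiag univ s).filter fun d => ∀ i, d i < q

theorem mem_boundedExponents {m q s : ℕ} {d : Fin m →₀ ℕ} :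
    d ∈ boundedExponents m q s ↔ ∑ i, d i = s ∧ ∀ i, d i < q := by
  simp [boundedExponents]

theorem card_boundedExponents (m q s : ℕ) :
    ((boundedExponents m q s).card : ℤ) =
      PowerSeries.coeff s ((∑ j ∈ range q, (PowerSeries.X : PowerSeries ℤ) ^ j) ^ m) := by
  have hcoeff (n : ℕ) : PowerSeries.coeff n (∑ j ∈ range q, (PowerSeries.X : PowerSeries ℤ) ^ j) =
      if n < q then 1 else 0 := by
    simp [PowerSeries.coeff_X_pow]
  have hprod : (∑ j ∈ range q, (PowerSeries.X : PowerSeries ℤ) ^ j) ^ m =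
      ∏ _i : Fin m, ∑ j ∈ range q, (PowerSeries.X : PowerSeries ℤ) ^ j := by simp
  rw [hprod, PowerSeries.coeff_prod, boundedExponents, card_filter]
  push_cast
  refine sum_congr rfl fun d _ => ?_
  simp only [hcoeff, prod_ite_zero, prod_const_one, mem_univ, true_implies]

theorem coeff_geom_pow (m q s : ℕ) (hm : 1 ≤ m) :
    PowerSeries.coeff s ((∑ j ∈ range q, (PowerSeries.X : PowerSeries ℤ) ^ j) ^ m) =
      ∑ i ∈ range (m + 1),
        if i * q ≤ s then
          (-1 : ℤ) ^ i * (m.choose i) * ((s - i * q + m - 1).choose (s - i * q))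
        else 0 := by
  have hgeom : (∑ j ∈ range q, (PowerSeries.X : PowerSeries ℤ) ^ j) ^ m =
      (-PowerSeries.X ^ q + 1) ^ m * (PowerSeries.invOneSubPow ℤ m).val := by
    have h1 : (-PowerSeries.X ^ q + 1 : PowerSeries ℤ) =
        (∑ j ∈ range q, PowerSeries.X ^ j) * (1 - PowerSeries.X) := by
      rw [geom_sum_mul_neg]; ring
    have h2 : (1 - PowerSeries.X : PowerSeries ℤ) ^ m * (PowerSeries.invOneSubPow ℤ m).val = 1 := by
      rw [← PowerSeries.invOneSubPow_inv_eq_one_sub_pow]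
      exact (PowerSeries.invOneSubPow ℤ m).inv_val
    rw [h1, mul_pow, mul_assoc, h2, mul_one]
  rw [hgeom, add_pow, sum_mul, map_sum]
  refine sum_congr rfl fun i _ => ?_
  have hterm : (-PowerSeries.X ^ q : PowerSeries ℤ) ^ i * 1 ^ (m - i) * (m.choose i : PowerSeries ℤ)
      * (PowerSeries.invOneSubPow ℤ m).val =
      PowerSeries.C ((-1 : ℤ) ^ i * (m.choose i)) *
        ((PowerSeries.invOneSubPow ℤ m).val * PowerSeries.X ^ (i * q)) := by
    simp only [map_mul, map_pow, map_neg, map_one, map_natCast]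
    rw [neg_pow, ← pow_mul, mul_comm q i]
    ring
  rw [hterm, PowerSeries.coeff_C_mul, PowerSeries.coeff_mul_X_pow',
    PowerSeries.invOneSubPow_val_eq_mk_sub_one_add_choose_of_pos _ _ hm]
  split_ifs with h
  · rw [PowerSeries.coeff_mk, show s - i * q + m - 1 = m - 1 + (s - i * q) by omega,
      Nat.choose_symm_add]
  · simp

theorem finrank_RM_eq (F : Type) [Field F] [Fintype F] (r m : ℕ) :
    Module.finrank F (RM F r m) = Module.finrank F (Vq F r m) := by
  have hinj : Function.Injective ((Ev F m).domRestrict (Vq F r m)) := by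
    rw [← LinearMap.ker_eq_bot, LinearMap.ker_eq_bot']
    intro p hp
    exact Subtype.ext (eq_zero_of_eval_eq_zero _ _ p.1 (fun v => congrFun hp v) p.2.2)
  rw [RM, ← LinearMap.range_domRestrict]
  exact LinearMap.finrank_range_of_inj hinj

theorem finrank_Vq_eq (F : Type) [Field F] [Fintype F] (r m : ℕ) :
    Module.finrank F (Vq F r m) =
      ∑ s ∈ range (r + 1), (boundedExponents m (Fintype.card F) s).card := by
  have hV : Vq F r m = restrictSupport F
      (((range (r + 1)).biUnion fun s => boundedExponents m (Fintype.card F) s :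
        Finset (Fin m →₀ ℕ)) : Set (Fin m →₀ ℕ)) := by
    ext p
    simp only [Vq, restrictTotalDegree, restrictDegree, Submodule.mem_inf,
      mem_restrictSupport_iff, ← Set.subset_inter_iff]
    have hq : 0 < Fintype.card F := Fintype.card_pos
    have hset : {d : Fin m →₀ ℕ | (d.sum fun _ e => e) ≤ r} ∩
        {d | ∀ i, d i ≤ Fintype.card F - 1} =
        (((range (r + 1)).biUnion fun s => boundedExponents m (Fintype.card F) s :
          Finset (Fin m →₀ ℕ)) : Set (Fin m →₀ ℕ)) := by
      ext d
      simp [mem_boundedExponents, Finsupp.sum_fintype, Nat.le_sub_one_iff_lt hq]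
    rw [hset]
  rw [hV, Module.finrank_eq_nat_card_basis (basisRestrictSupport F _), Nat.card_coe_set_eq,
    Set.ncard_coe_finset, card_biUnion]
  intro s _ t _ hst
  refine disjoint_left.mpr fun d hs ht => hst ?_
  rw [← (mem_boundedExponents.mp hs).1, (mem_boundedExponents.mp ht).1]

/-- `dim RM_q(r,m) = Σ_{s=0}^{r} Σ_{i=0}^{m} (−1)^i C(m,i) C(s−iq+m−1, s−iq)`,
where a term is `0` whenever `s − iq < 0`. -/
theorem stmt_2 (F : Type) [Field F] [Fintype F] (q : ℕ) (hq : q = Fintype.card F)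
    (m r : ℕ) (hm : 1 ≤ m) (hr : r ≤ m * (q - 1)) :
    (Module.finrank F (RM F r m) : ℤ) =
      ∑ s ∈ Finset.range (r + 1), ∑ i ∈ Finset.range (m + 1),
        if i * q ≤ s then
          (-1 : ℤ) ^ i * (m.choose i) * ((s - i * q + m - 1).choose (s - i * q))
        else 0 := by
  rw [finrank_RM_eq, finrank_Vq_eq, ← hq]
  push_cast
  refine sum_congr rfl fun s _ => ?_
  rw [card_boundedExponents, coeff_geom_pow m q s hm]

end
end

section
/- Let q = 3, let m ≥ 3 and 1 ≤ t ≤ m−2 be integers, and set r = 2t + 1. Write F_3 = {ω_1, ω_2, ω_3}. Define Q(X_1,…,X_m) = (Π_{i=1}^{t−1} (X_i^{2} − 1)) · (X_t − ω_3)(X_{t+1} − ω_3)(X_{t+2} − ω_3). Then Q ∈ V_3(r,m), the support of Ev(Q) corresponds to the set {a = (a_1,…,a_m) ∈ F_3^m : a_1 = ⋯ = a_{t−1} = 0 and a_t, a_{t+1}, a_{t+2} ∈ {ω_1, ω_2}}, and wt(Ev(Q)) = 8·3^{m−t−2}, which is strictly greater than the minimum distance 2·3^{m−t−1} of RM_3(r,m).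 -/
/-!
The support of `Q` is read off factor by factor: it is a product of subsets of `F`, so its
weight is a product of cardinalities. Both `Q` and a minimum weight codeword are instances of one
family, `gridPoly`, a product over the coordinates of `X_i ^ 2 - 1`, `X_i - ω` or `1`.

The minimum distance is bounded below by induction on the number of variables. Write a nonzero `f`
as a polynomial in `X_0` of degree `k ≤ 2` with leading coefficient `g`, a polynomial in the
remaining variables of total degree at most `deg f - k`. Over each point where `g` does not vanish,
`f` restricts to a univariate polynomial of degree `k`, which has at least `3 - k` non-zeros in `F`.
Hence `f` has at least `3 - k` times as many non-zeros as `g` (`mul_numNonzeros_le`). Feeding this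
into a simultaneous induction on the bounds for total degrees `2t` and `2t + 1` gives the claim
(`numNonzeros_bounds`). The polynomial `gridPoly` with `t` quadratic factors and one linear factor
attains the bound.
-/

open MvPolynomial Finset

noncomputable section

/-- The number of points of `F^m` at which `f` does not vanish. -/
def numNonzeros {F : Type} [Field F] [Fintype F] {m : ℕ} (f : MvPolynomial (Fin m) F) : ℕ :=
  Set.ncard {a : Fin m → F | eval a f ≠ 0}

lemma wt_Ev {F : Type} [Field F] [Fintype F] {m : ℕ} (f : MvPolynomial (Fin m) F) :
    wt (Ev F m f) = numNonzeros f := rfl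

lemma mem_Vq_iff {F : Type} [Field F] [Fintype F] {r m : ℕ} (f : MvPolynomial (Fin m) F) :
    f ∈ Vq F r m ↔ f.totalDegree ≤ r ∧ ∀ i, f.degreeOf i ≤ Fintype.card F - 1 := by
  rw [Vq, Submodule.mem_inf, mem_restrictTotalDegree, mem_restrictDegree]
  simp only [degreeOf_le_iff]
  exact and_congr_right fun _ => ⟨fun h i s hs => h s hs i, fun h s hs i => h i s hs⟩

lemma card_sub_natDegree_le {F : Type} [Field F] [Fintype F] (p : Polynomial F) (hp : p ≠ 0) :
    Fintype.card F - p.natDegree ≤ Set.ncard {y : F | p.eval y ≠ 0} := by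
  classical
  have h1 : {y : F | p.eval y ≠ 0} = ((p.roots.toFinset)ᶜ : Finset F) := by
    ext y
    simp [hp]
  rw [h1, Set.ncard_coe_finset, Finset.card_compl]
  have h2 := Multiset.toFinset_card_le p.roots
  have h3 := p.card_roots'
  omega

/-- If `f` has degree `k` in `X_0` with leading coefficient `g`, then each non-zero of `g` lies
under at least `q - k` non-zeros of `f`. -/
lemma mul_numNonzeros_le {F : Type} [Field F] [Fintype F] {m : ℕ}
    (f : MvPolynomial (Fin (m + 1)) F) :
    (Fintype.card F - f.degreeOf 0) * numNonzeros (finSuccEquiv F m f).leadingCoeff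
      ≤ numNonzeros f := by
  classical
  set p := finSuccEquiv F m f with hp
  have hfib : ∀ a : Fin m → F, eval a p.leadingCoeff ≠ 0 →
      Fintype.card F - f.degreeOf 0 ≤
        (Finset.univ.filter fun y : F => eval (Fin.cons y a : Fin (m + 1) → F) f ≠ 0).card := by
    intro a ha
    have hdeg : (p.map (eval a)).natDegree = f.degreeOf 0 := by
      rw [Polynomial.natDegree_map_of_leadingCoeff_ne_zero _ ha, hp, natDegree_finSuccEquiv]
    have hne : p.map (eval a) ≠ 0 := by
      intro h0
      apply ha
      have := congrArg (fun u => Polynomial.coeff u p.natDegree) h0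
      simpa [Polynomial.coeff_map] using this
    have := card_sub_natDegree_le _ hne
    rw [hdeg] at this
    refine this.trans (le_of_eq ?_)
    rw [← Set.ncard_coe_finset]
    congr 1
    ext y
    simp [eval_eq_eval_mv_eval', hp]
  have hA : numNonzeros p.leadingCoeff =
      (Finset.univ.filter fun a : Fin m → F => eval a p.leadingCoeff ≠ 0).card := by
    rw [numNonzeros, ← Set.ncard_coe_finset]; simp
  have hB : numNonzeros f =
      (Finset.univ.filter fun a : Fin (m + 1) → F => eval a f ≠ 0).card := by
    rw [numNonzeros, ← Set.ncard_coe_finset]; simp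
  rw [hA, hB, mul_comm, ← smul_eq_mul]
  refine (Finset.card_nsmul_le_sum _
    (fun a => (Finset.univ.filter fun y : F =>
      eval (Fin.cons y a : Fin (m + 1) → F) f ≠ 0).card) _ ?_).trans ?_
  · intro a ha
    exact hfib a (by simpa using ha)
  · rw [← Finset.card_sigma]
    refine Finset.card_le_card_of_injOn
      (fun x => (Fin.cons x.2 x.1 : Fin (m + 1) → F)) ?_ ?_
    · rintro ⟨a, y⟩ h
      simp only [Finset.coe_sigma, Set.mem_sigma_iff, Finset.mem_coe, Finset.mem_filter,
        Finset.mem_univ, true_and] at h ⊢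
      exact h.2
    · rintro ⟨a, y⟩ - ⟨b, z⟩ - h
      obtain ⟨h1, h2⟩ := Fin.cons_inj.1 h
      exact Sigma.ext h2 (heq_of_eq h1)

/-- Lower bounds for the number of non-zeros over a field with three elements, for even and odd
bounds on the total degree; the two parities are interleaved in the induction. In the even case `t`
may exceed `m`, where the truncated exponent `m - t = 0` only says that `f` has a non-zero. -/
lemma numNonzeros_bounds {F : Type} [Field F] [Fintype F] (hq3 : Fintype.card F = 3) (m : ℕ) :
    ∀ f : MvPolynomial (Fin m) F, f ≠ 0 → (∀ i, f.degreeOf i ≤ 2) → ∀ t : ℕ,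
      (f.totalDegree ≤ 2 * t → 3 ^ (m - t) ≤ numNonzeros f) ∧
      (f.totalDegree ≤ 2 * t + 1 → t + 1 ≤ m → 2 * 3 ^ (m - t - 1) ≤ numNonzeros f) := by
  induction m with
  | zero =>
    intro f hf _ t
    refine ⟨fun _ => ?_, fun _ h => by omega⟩
    obtain ⟨c, rfl⟩ := C_surjective (Fin 0) f
    have hc : c ≠ 0 := by rintro rfl; simp at hf
    simp [numNonzeros, hc]
  | succ m ih =>
    intro f hf hdeg t
    have hmul := mul_numNonzeros_le f
    set g := (finSuccEquiv F m f).leadingCoeff with hg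
    have hg0 : g ≠ 0 := by simpa [hg] using hf
    have hgdeg : ∀ i, g.degreeOf i ≤ 2 := fun i =>
      (degreeOf_coeff_finSuccEquiv f i _).trans (hdeg _)
    have htot : g.totalDegree + f.degreeOf 0 ≤ f.totalDegree := by
      rw [← natDegree_finSuccEquiv]
      exact totalDegree_coeff_finSuccEquiv_add_le f _ hg0
    have hk := hdeg 0
    have ih' := ih g hg0 hgdeg
    have hpos : 1 ≤ numNonzeros g := (Nat.one_le_pow _ _ (by norm_num)).trans
      ((ih' g.totalDegree).1 (by omega))
    rw [hq3] at hmul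
    generalize f.degreeOf 0 = k at *
    constructor
    · intro hft
      by_cases htm : m < t
      · rw [show m + 1 - t = 0 by omega]
        interval_cases k <;> simp at hmul ⊢ <;> omega
      have hpow : 3 ^ (m + 1 - t) = 3 * 3 ^ (m - t) := by
        rw [show m + 1 - t = (m - t) + 1 by omega, pow_succ, mul_comm]
      interval_cases k
      · have := (ih' t).1 (by omega)
        omega
      · obtain ⟨s, rfl⟩ : ∃ s, t = s + 1 := ⟨t - 1, by omega⟩
        have := (ih' s).2 (by omega) (by omega)
        rw [show m - s - 1 = m - (s + 1) by omega] at this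
        omega
      · obtain ⟨s, rfl⟩ : ∃ s, t = s + 1 := ⟨t - 1, by omega⟩
        have := (ih' s).1 (by omega)
        rw [show m + 1 - (s + 1) = m - s by omega]
        omega
    · intro hft htm
      rw [show m + 1 - t - 1 = m - t by omega]
      interval_cases k
      · by_cases h : t = m
        · subst h
          simp
          omega
        have := (ih' t).2 (by omega) (by omega)
        have hpow : 3 ^ (m - t) = 3 * 3 ^ (m - t - 1) := by
          rw [show m - t = (m - t - 1) + 1 by omega, pow_succ, mul_comm]; simp
        omega
      · have := (ih' t).1 (by omega)
        omega
      · obtain ⟨s, rfl⟩ : ∃ s, t = s + 1 := ⟨t - 1, by omega⟩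
        have := (ih' s).2 (by omega) (by omega)
        rw [show m - s - 1 = m - (s + 1) by omega] at this
        omega

/-- The polynomial `∏_{i < a} (X_i ^ 2 - 1) · ∏_{a ≤ i < b} (X_i - ω)`, with variables numbered
from `0`. -/
def gridPoly {F : Type} [Field F] (m a b : ℕ) (ω : F) : MvPolynomial (Fin m) F :=
  ∏ i : Fin m, if (i : ℕ) < a then X i ^ 2 - 1 else if (i : ℕ) < b then X i - C ω else 1

lemma prod_step {M : Type*} [CommMonoid M] (x y z : M) {m a b : ℕ} (hab : a ≤ b) (hbm : b ≤ m) :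
    (∏ i : Fin m, if (i : ℕ) < a then x else if (i : ℕ) < b then y else z) =
      x ^ a * y ^ (b - a) * z ^ (m - b) := by
  obtain ⟨d, rfl⟩ := Nat.exists_eq_add_of_le hab
  obtain ⟨c, rfl⟩ := Nat.exists_eq_add_of_le hbm
  rw [Fin.prod_univ_add, Fin.prod_univ_add, Nat.add_sub_cancel_left, Nat.add_sub_cancel_left]
  simp [add_assoc]

lemma sum_step (x y z : ℕ) {m a b : ℕ} (hab : a ≤ b) (hbm : b ≤ m) :
    (∑ i : Fin m, if (i : ℕ) < a then x else if (i : ℕ) < b then y else z) =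
      a * x + (b - a) * y + (m - b) * z := by
  obtain ⟨d, rfl⟩ := Nat.exists_eq_add_of_le hab
  obtain ⟨c, rfl⟩ := Nat.exists_eq_add_of_le hbm
  rw [Fin.sum_univ_add, Fin.sum_univ_add, Nat.add_sub_cancel_left, Nat.add_sub_cancel_left]
  simp [add_assoc]

lemma gridPoly_mem_Vq {F : Type} [Field F] [Fintype F] (hq3 : Fintype.card F = 3) {m a b r : ℕ}
    (hab : a ≤ b) (hbm : b ≤ m) (hr : 2 * a + (b - a) ≤ r) (ω : F) :
    gridPoly m a b ω ∈ Vq F r m := by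
  classical
  rw [mem_Vq_iff, hq3]
  constructor
  · refine (totalDegree_finsetProd _ _).trans ?_
    refine le_trans (Finset.sum_le_sum (g := fun i : Fin m =>
      if (i : ℕ) < a then 2 else if (i : ℕ) < b then 1 else 0) fun i _ => ?_) ?_
    · split_ifs
      · exact (totalDegree_sub _ _).trans (by simp [totalDegree_X_pow])
      · exact (totalDegree_sub _ _).trans (by simp)
      · simp
    · rw [sum_step _ _ _ hab hbm]
      omega
  · intro j
    refine (degreeOf_prod_le _ _ _).trans ?_
    refine le_trans (Finset.sum_le_sum (g := fun i : Fin m => if i = j then 2 else 0)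
      fun i _ => ?_) (by simp)
    have hX : (X i : MvPolynomial (Fin m) F).degreeOf j = if j = i then 1 else 0 :=
      degreeOf_X _ _
    have hX2 : (X i ^ 2 : MvPolynomial (Fin m) F).degreeOf j ≤ 2 * if j = i then 1 else 0 :=
      hX ▸ degreeOf_pow_le j (X i) 2
    have h1 := degreeOf_sub_le j (X i ^ 2 : MvPolynomial (Fin m) F) 1
    have h2 := degreeOf_sub_le j (X i : MvPolynomial (Fin m) F) (C ω)
    rw [degreeOf_one] at h1
    rw [degreeOf_C] at h2
    by_cases hij : j = i
    · subst hij
      simp only [if_true] at hX hX2 ⊢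
      split_ifs
      · omega
      · omega
      · simp
    · simp only [hij, Ne.symm hij, if_false] at hX hX2 ⊢
      split_ifs
      · omega
      · omega
      · simp

lemma sq_sub_one_ne_zero_iff {F : Type} [Field F] [Fintype F] (hq3 : Fintype.card F = 3) (x : F) :
    x ^ 2 - 1 ≠ 0 ↔ x = 0 := by
  constructor
  · intro h
    by_contra hx
    have := FiniteField.pow_card_sub_one_eq_one x hx
    rw [hq3] at this
    exact h (by simpa [sub_eq_zero] using this)
  · rintro rfl
    simp

lemma eval_gridPoly_ne_zero_iff {F : Type} [Field F] [Fintype F] (hq3 : Fintype.card F = 3)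
    {m a b : ℕ} (ω : F) (x : Fin m → F) :
    eval x (gridPoly m a b ω) ≠ 0 ↔
      ∀ i : Fin m, if (i : ℕ) < a then x i = 0 else if (i : ℕ) < b then x i ≠ ω else True := by
  rw [gridPoly, map_prod, Finset.prod_ne_zero_iff]
  refine forall_congr' fun i => ?_
  split_ifs
  · simpa using sq_sub_one_ne_zero_iff hq3 (x i)
  · simp [sub_eq_zero]
  · simp

lemma numNonzeros_gridPoly {F : Type} [Field F] [Fintype F] (hq3 : Fintype.card F = 3)
    {m a b : ℕ} (hab : a ≤ b) (hbm : b ≤ m) (ω : F) :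
    numNonzeros (gridPoly m a b ω) = 2 ^ (b - a) * 3 ^ (m - b) := by
  classical
  have h : {x : Fin m → F | eval x (gridPoly m a b ω) ≠ 0} =
      (Fintype.piFinset fun i : Fin m => if (i : ℕ) < a then ({0} : Finset F)
        else if (i : ℕ) < b then {ω}ᶜ else Finset.univ : Finset (Fin m → F)) := by
    ext x
    rw [Set.mem_ofPred_eq, eval_gridPoly_ne_zero_iff hq3, Finset.mem_coe, Fintype.mem_piFinset]
    refine forall_congr' fun i => ?_
    split_ifs <;> simp
  rw [numNonzeros, h, Set.ncard_coe_finset, Fintype.card_piFinset]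
  rw [← one_mul (2 ^ (b - a)), ← one_pow a, ← prod_step 1 2 3 hab hbm]
  refine Finset.prod_congr rfl fun i _ => ?_
  split_ifs
  · simp
  · simp [Finset.card_compl, hq3]
  · simp [hq3]

lemma prod_fin_split {M : Type*} [CommMonoid M] {m a : ℕ} (h : a + 3 ≤ m) (f : Fin m → M)
    (hf : ∀ i : Fin m, a + 3 ≤ (i : ℕ) → f i = 1) :
    ∏ i, f i = (∏ i : Fin a, f (Fin.castLE (by omega) i)) * f ⟨a, by omega⟩ *
      f ⟨a + 1, by omega⟩ * f ⟨a + 2, by omega⟩ := by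
  obtain ⟨c, rfl⟩ := Nat.exists_eq_add_of_le h
  rw [Fin.prod_univ_add]
  rw [Finset.prod_eq_one (s := Finset.univ) (f := fun i : Fin c => f (Fin.natAdd (a + 3) i))
    (fun i _ => hf _ (by simp)), mul_one]
  rw [Fin.prod_univ_castSucc, Fin.prod_univ_castSucc, Fin.prod_univ_castSucc]
  rfl

/-- for `q = 3`, `m ≥ 3`, `1 ≤ t ≤ m−2`, `r = 2t+1`, and
`F_3 = {ω_1, ω_2, ω_3}`, the polynomial
`Q = Π_{i=1}^{t−1}(X_i^2−1) · (X_t−ω_3)(X_{t+1}−ω_3)(X_{t+2}−ω_3)`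
lies in `V_3(r,m)`, its evaluation has support
`{a : a_1 = ⋯ = a_{t−1} = 0, a_t, a_{t+1}, a_{t+2} ∈ {ω_1, ω_2}}` and weight
`8·3^{m−t−2}`, strictly greater than the minimum distance `2·3^{m−t−1}` of
`RM_3(r,m)`. -/
theorem stmt_14 (F : Type) [Field F] [Fintype F] (hq3 : Fintype.card F = 3)
    (m t r : ℕ) (hm : 3 ≤ m) (ht1 : 1 ≤ t) (ht2 : t ≤ m - 2) (hr : r = 2 * t + 1)
    (ω1 ω2 ω3 : F) (h12 : ω1 ≠ ω2) (h13 : ω1 ≠ ω3) (h23 : ω2 ≠ ω3)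
    (Q : MvPolynomial (Fin m) F)
    (hQ : Q = (∏ i : Fin (t - 1),
        ((X (Fin.castLE (by omega) i) : MvPolynomial (Fin m) F) ^ 2 - 1)) *
      (X (⟨t - 1, by omega⟩ : Fin m) - C ω3) *
      (X (⟨t, by omega⟩ : Fin m) - C ω3) *
      (X (⟨t + 1, by omega⟩ : Fin m) - C ω3)) :
    Q ∈ Vq F r m ∧
    Function.support (Ev F m Q) =
      {a : Fin m → F | (∀ i : Fin (t - 1), a (Fin.castLE (by omega) i) = 0) ∧
        (a ⟨t - 1, by omega⟩ = ω1 ∨ a ⟨t - 1, by omega⟩ = ω2) ∧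
        (a ⟨t, by omega⟩ = ω1 ∨ a ⟨t, by omega⟩ = ω2) ∧
        (a ⟨t + 1, by omega⟩ = ω1 ∨ a ⟨t + 1, by omega⟩ = ω2)} ∧
    wt (Ev F m Q) = 8 * 3 ^ (m - t - 2) ∧
    minDist (RM F r m) = 2 * 3 ^ (m - t - 1) ∧
    2 * 3 ^ (m - t - 1) < wt (Ev F m Q) := by
  obtain ⟨a, rfl⟩ : ∃ a, t = a + 1 := ⟨t - 1, by omega⟩
  have hQG : Q = gridPoly m a (a + 3) ω3 := by
    rw [hQ]
    symm
    rw [gridPoly, prod_fin_split (m := m) (a := a) (by omega)]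
    · simp
    · intro i hi
      rw [if_neg (by omega), if_neg (by omega)]
  have hwt : wt (Ev F m Q) = 8 * 3 ^ (m - (a + 1) - 2) := by
    rw [wt_Ev, hQG, numNonzeros_gridPoly hq3 (by omega) (by omega)]
    rw [show a + 3 - a = 3 by omega, show m - (a + 3) = m - (a + 1) - 2 by omega]
    norm_num
  have hω : ∀ x : F, x ≠ ω3 ↔ x = ω1 ∨ x = ω2 := by
    classical
    intro x
    have huniv : ({ω1, ω2, ω3} : Finset F) = Finset.univ := by
      apply Finset.eq_univ_of_card
      rw [hq3, Finset.card_eq_three]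
      exact ⟨ω1, ω2, ω3, h12, h13, h23, rfl⟩
    have hx : x ∈ ({ω1, ω2, ω3} : Finset F) := huniv ▸ Finset.mem_univ x
    simp only [Finset.mem_insert, Finset.mem_singleton] at hx
    constructor
    · tauto
    · rintro (rfl | rfl) <;> assumption
  refine ⟨?_, ?_, hwt, ?_, ?_⟩
  · rw [hQG]
    exact gridPoly_mem_Vq hq3 (by omega) (by omega) (by omega) _
  · ext x
    rw [Function.mem_support, Set.mem_ofPred_eq]
    change eval x Q ≠ 0 ↔ _
    rw [hQG, eval_gridPoly_ne_zero_iff hq3]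
    simp only [← hω]
    constructor
    · intro h
      refine ⟨fun i => ?_, ?_, ?_, ?_⟩
      · have hi := h (Fin.castLE (by omega) i)
        have hia : ((Fin.castLE (by omega) i : Fin m) : ℕ) < a := i.2
        rwa [if_pos hia] at hi
      · simpa using h ⟨a, by omega⟩
      · simpa using h ⟨a + 1, by omega⟩
      · simpa using h ⟨a + 2, by omega⟩
    · rintro ⟨h0, h1, h2, h3⟩ ⟨i, hi⟩
      dsimp only
      split_ifs with hia hib
      · exact h0 ⟨i, hia⟩
      · obtain rfl | rfl | rfl : i = a ∨ i = a + 1 ∨ i = a + 2 := by omega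
        · exact h1
        · exact h2
        · exact h3
  · apply le_antisymm
    · -- the bound is attained by `a + 1` quadratic factors and one linear factor
      have hG := numNonzeros_gridPoly hq3 (m := m) (a := a + 1) (b := a + 2)
        (by omega) (by omega) ω3
      rw [show a + 2 - (a + 1) = 1 by omega, show m - (a + 2) = m - (a + 1) - 1 by omega,
        pow_one] at hG
      refine Nat.sInf_le ⟨Ev F m (gridPoly m (a + 1) (a + 2) ω3), ?_, ?_, hG⟩
      · exact Submodule.mem_map_of_mem
          (gridPoly_mem_Vq hq3 (by omega) (by omega) (by omega) _)
      · intro h0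
        rw [← wt_Ev, h0] at hG
        simp [wt] at hG
    · -- nonemptiness matters, since `sInf ∅ = 0`; the codeword of `Q` is a witness
      refine le_csInf ⟨_, Ev F m Q, ?_, ?_, rfl⟩ ?_
      · rw [hQG]
        exact Submodule.mem_map_of_mem
          (gridPoly_mem_Vq hq3 (by omega) (by omega) (by omega) _)
      · intro h0
        rw [h0] at hwt
        simp [wt] at hwt
      · rintro w ⟨c, ⟨f, hf, rfl⟩, hc, rfl⟩
        rw [SetLike.mem_coe, mem_Vq_iff, hq3] at hf
        have hf0 : f ≠ 0 := by
          rintro rfl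
          simp at hc
        exact (numNonzeros_bounds hq3 m f hf0 hf.2 (a + 1)).2 (hf.1.trans hr.le) (by omega)
  · rw [hwt, show m - (a + 1) - 1 = m - (a + 1) - 2 + 1 by omega, pow_succ]
    have : 0 < 3 ^ (m - (a + 1) - 2) := by positivity
    omega

end
end

section
/- Let q = 3, let m ≥ 3 and 1 ≤ t ≤ m−2 be integers, and set r = 2t + 1. Write F_3 = {ω_1, ω_2, ω_3}. Define Q(X_1,…,X_m) = (Π_{i=1}^{t−1} (X_i^{2} − 1)) · (X_t − ω_3)(X_{t+1} − ω_3)(X_{t+2} − ω_3). Then there is no minimum weight codeword c of RM_3(r,m) whose support is strictly contained in the support of Ev(Q). -/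
/-!
Any nonzero codeword `c` of `RM_3(2t+1, m)` whose support lies in that of `Ev Q` has exactly the
same support as `Ev Q`, so the inclusion is never strict.

The support of `Ev Q` lies in a box `∏ S i`, with `S i` equal to `{0}` for the first `t - 1`
coordinates, to `F \ {ω3}` for the next three, and to `F` for the remaining ones, so that
`∑ (|S i| - 1) = 2m - 2t - 1` and `deg c + ∑ (|S i| - 1) ≤ 2m`. Let `P` and `P'` be two points of
the box that differ in a single coordinate. The polynomial
`g = ∏ i, ∏ b ∈ S i \ {P i, P' i}, (X i - b)` has degree less than `∑ (|S i| - 1)` and vanishes on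
the box outside `P` and `P'`. Since a polynomial of degree less than `(q - 1) m` sums to zero
over `F^m`, one gets `c(P) g(P) + c(P') g(P') = 0`; as `g(P) ≠ 0`, the value `c(P)` vanishes
as soon as `c(P')` does (`eval_update_ne_zero`). Moving one coordinate at a time, a codeword that
is nonzero at one point of the box is nonzero on the whole box (`eval_ne_zero_of_mem_box`).
-/

open MvPolynomial Finset

noncomputable section

/-- A polynomial vanishing off the box `∏ S i`, of degree small enough relative to the box, keeps
a nonzero value when one coordinate of the point is changed within the box. -/
theorem eval_update_ne_zero {F : Type} [Field F] [Fintype F] [DecidableEq F] {m : ℕ}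
    (S : Fin m → Finset F) (f : MvPolynomial (Fin m) F)
    (hdeg : f.totalDegree + ∑ i, ((S i).card - 1) ≤ (Fintype.card F - 1) * m)
    (hf : ∀ x, eval x f ≠ 0 → ∀ i, x i ∈ S i)
    (P : Fin m → F) (hP : eval P f ≠ 0) (j : Fin m) (a : F) (ha : a ∈ S j) :
    eval (Function.update P j a) f ≠ 0 := by
  intro h0
  have haP : a ≠ P j := by
    rintro rfl
    exact hP (by simpa using h0)
  have hPS := hf P hP
  set P' := Function.update P j a with hP'
  set T : Fin m → Finset F := fun i => S i \ {P i, P' i} with hT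
  set g : MvPolynomial (Fin m) F := ∏ i, ∏ b ∈ T i, (X i - C b) with hg
  have hgeval : ∀ x, eval x g = ∏ i, ∏ b ∈ T i, (x i - b) := by
    intro x
    simp [hg]
  have hgdeg : g.totalDegree ≤ ∑ i, (T i).card := by
    refine (totalDegree_finsetProd _ _).trans (Finset.sum_le_sum fun i _ => ?_)
    refine (totalDegree_finsetProd _ _).trans ?_
    calc ∑ b ∈ T i, (X i - C b : MvPolynomial (Fin m) F).totalDegree ≤ ∑ b ∈ T i, 1 :=
          Finset.sum_le_sum fun b _ => (totalDegree_sub_C_le _ _).trans (by simp)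
      _ = (T i).card := by simp
  have hTcard : ∑ i, (T i).card < ∑ i, ((S i).card - 1) := by
    refine Finset.sum_lt_sum (fun i _ => ?_) ⟨j, Finset.mem_univ _, ?_⟩
    · rw [← Finset.card_erase_of_mem (hPS i)]
      refine Finset.card_le_card fun b hb => ?_
      simp only [hT, Finset.mem_sdiff, Finset.mem_insert, Finset.mem_singleton, not_or] at hb
      exact Finset.mem_erase.2 ⟨hb.2.1, hb.1⟩
    · rw [← Finset.card_erase_of_mem (hPS j)]
      refine Finset.card_lt_card ((Finset.ssubset_iff_of_subset ?_).2 ⟨a, ?_, ?_⟩)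
      · intro b hb
        simp only [hT, Finset.mem_sdiff, Finset.mem_insert, Finset.mem_singleton, not_or] at hb
        exact Finset.mem_erase.2 ⟨hb.2.1, hb.1⟩
      · exact Finset.mem_erase.2 ⟨haP, ha⟩
      · simp [hT, hP']
  have hsum : ∑ x, eval x (f * g) = 0 := by
    apply MvPolynomial.sum_eval_eq_zero
    have := totalDegree_mul f g
    simp only [Fintype.card_fin]
    omega
  -- Only the term at `P` can survive in the sum.
  rw [Finset.sum_eq_single P] at hsum
  · rw [eval_mul, hgeval] at hsum
    refine (mul_ne_zero hP ?_) hsum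
    refine Finset.prod_ne_zero_iff.2 fun i _ => Finset.prod_ne_zero_iff.2 fun b hb => ?_
    simp only [hT, Finset.mem_sdiff, Finset.mem_insert, Finset.mem_singleton, not_or] at hb
    exact sub_ne_zero.2 (Ne.symm hb.2.1)
  · intro x _ hx
    rw [eval_mul]
    by_contra hne
    obtain ⟨hxf, hxg⟩ := mul_ne_zero_iff.1 hne
    have hxS := hf x hxf
    rw [hgeval] at hxg
    have key : ∀ i, x i = P i ∨ x i = P' i := by
      intro i
      by_contra hi
      have hi' : x i ∈ T i := by
        simp only [hT, Finset.mem_sdiff, Finset.mem_insert, Finset.mem_singleton]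
        exact ⟨hxS i, hi⟩
      exact hxg (Finset.prod_eq_zero (Finset.mem_univ i)
        (Finset.prod_eq_zero hi' (sub_self _)))
    have hoff : ∀ i, i ≠ j → x i = P i := by
      intro i hi
      have := key i
      simpa [hP', Function.update_of_ne hi] using this
    rcases key j with hj | hj
    · apply hx
      funext i
      by_cases hi : i = j
      · rw [hi, hj]
      · exact hoff i hi
    · have : x = P' := by
        funext i
        by_cases hi : i = j
        · rw [hi, hj]
        · rw [hoff i hi, hP', Function.update_of_ne hi]
      exact hxf (this ▸ h0)
  · simp

theorem eval_ne_zero_of_mem_box {F : Type} [Field F] [Fintype F] [DecidableEq F] {m : ℕ}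
    (S : Fin m → Finset F) (f : MvPolynomial (Fin m) F)
    (hdeg : f.totalDegree + ∑ i, ((S i).card - 1) ≤ (Fintype.card F - 1) * m)
    (hf : ∀ x, eval x f ≠ 0 → ∀ i, x i ∈ S i)
    (P : Fin m → F) (hP : eval P f ≠ 0) (x : Fin m → F) (hx : ∀ i, x i ∈ S i) :
    eval x f ≠ 0 := by
  have h : ∀ A : Finset (Fin m), eval (A.piecewise x P) f ≠ 0 := by
    intro A
    induction A using Finset.induction_on with
    | empty => simpa using hP
    | insert j A _ ih =>
      rw [Finset.piecewise_insert]
      exact eval_update_ne_zero S f hdeg hf _ ih j _ (hx j)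
  simpa using h Finset.univ

/-- with `q = 3`, `m ≥ 3`, `1 ≤ t ≤ m−2`, `r = 2t+1` and `Q` as in
Statement 14, no minimum weight codeword of `RM_3(r,m)` has support strictly
contained in the support of `Ev Q`. -/
theorem stmt_15 (F : Type) [Field F] [Fintype F] (hq3 : Fintype.card F = 3)
    (m t r : ℕ) (hm : 3 ≤ m) (ht1 : 1 ≤ t) (ht2 : t ≤ m - 2) (hr : r = 2 * t + 1)
    (ω1 ω2 ω3 : F) (h12 : ω1 ≠ ω2) (h13 : ω1 ≠ ω3) (h23 : ω2 ≠ ω3)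
    (Q : MvPolynomial (Fin m) F)
    (hQ : Q = (∏ i : Fin (t - 1),
        ((X (Fin.castLE (by omega) i) : MvPolynomial (Fin m) F) ^ 2 - 1)) *
      (X (⟨t - 1, by omega⟩ : Fin m) - C ω3) *
      (X (⟨t, by omega⟩ : Fin m) - C ω3) *
      (X (⟨t + 1, by omega⟩ : Fin m) - C ω3)) :
    ¬ ∃ c : (Fin m → F) → F, c ∈ RM F r m ∧ c ≠ 0 ∧ wt c = minDist (RM F r m) ∧
        Function.support c ⊂ Function.support (Ev F m Q) := by
  classical
  rintro ⟨c, hc, hc0, -, hsub, hnot⟩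
  obtain ⟨f, hfV, rfl⟩ := Submodule.mem_map.1 hc
  have hfdeg : f.totalDegree ≤ r :=
    (MvPolynomial.mem_restrictTotalDegree _ _ _).1 (Submodule.mem_inf.1 hfV).1
  set S : Fin m → Finset F := fun i =>
    if i.val < t - 1 then {0} else if i.val < t + 2 then Finset.univ.erase ω3 else Finset.univ
    with hS
  have hQS : ∀ x, eval x Q ≠ 0 → ∀ i, x i ∈ S i := by
    intro x hx i
    rw [hQ] at hx
    simp only [eval_mul, eval_prod, eval_sub, eval_pow, eval_X, eval_C, map_one,
      mul_ne_zero_iff, Finset.prod_ne_zero_iff, sub_ne_zero] at hx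
    obtain ⟨⟨⟨h1, h2⟩, h3⟩, h4⟩ := hx
    simp only [hS]
    split_ifs with hi hi'
    · have h := h1 ⟨i.val, hi⟩ (Finset.mem_univ _)
      rw [Finset.mem_singleton]
      by_contra hxi
      apply h
      have := FiniteField.pow_card_sub_one_eq_one (x i) hxi
      rw [hq3] at this
      exact this
    · have : i = ⟨t - 1, by omega⟩ ∨ i = ⟨t, by omega⟩ ∨ i = ⟨t + 1, by omega⟩ := by
        simp only [Fin.ext_iff]
        omega
      rcases this with h | h | h <;> rw [h] <;> simpa
    · exact Finset.mem_univ _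
  have hcard : ∑ i, ((S i).card - 1) = 3 + 2 * (m - t - 2) := by
    have hterm : ∀ i : Fin m, (S i).card - 1 =
        (fun n : ℕ => if n < t - 1 then 0 else if n < t + 2 then 1 else 2) i.val := by
      intro i
      simp only [hS]
      split_ifs <;> simp [hq3]
    rw [Finset.sum_congr rfl fun i _ => hterm i, Fin.sum_univ_eq_sum_range
      (fun n : ℕ => if n < t - 1 then 0 else if n < t + 2 then 1 else 2)]
    obtain ⟨s, rfl⟩ : ∃ s, t = s + 1 := ⟨t - 1, by omega⟩
    obtain ⟨k, rfl⟩ : ∃ k, m = s + 3 + k := ⟨m - s - 3, by omega⟩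
    rw [Finset.sum_range_add, Finset.sum_range_add]
    have e1 : ∑ n ∈ Finset.range s,
        (if n < s + 1 - 1 then 0 else if n < s + 1 + 2 then 1 else 2) = 0 :=
      Finset.sum_eq_zero fun n hn => by
        have := Finset.mem_range.1 hn
        rw [if_pos (by omega)]
    have e2 : ∑ n ∈ Finset.range k,
        (if s + 3 + n < s + 1 - 1 then 0 else if s + 3 + n < s + 1 + 2 then 1 else 2)
          = ∑ n ∈ Finset.range k, 2 :=
      Finset.sum_congr rfl fun n hn => by
        rw [if_neg (by omega), if_neg (by omega)]
    have e3 : ∑ n ∈ Finset.range 3,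
        (if s + n < s + 1 - 1 then 0 else if s + n < s + 1 + 2 then 1 else 2)
          = ∑ n ∈ Finset.range 3, 1 :=
      Finset.sum_congr rfl fun n hn => by
        have := Finset.mem_range.1 hn
        rw [if_neg (by omega), if_pos (by omega)]
    rw [e1, e2, e3, Finset.sum_const, Finset.sum_const, Finset.card_range, Finset.card_range,
      smul_eq_mul, smul_eq_mul]
    omega
  have hdeg : f.totalDegree + ∑ i, ((S i).card - 1) ≤ (Fintype.card F - 1) * m := by
    rw [hcard, hq3]
    omega
  have hfS : ∀ x, eval x f ≠ 0 → ∀ i, x i ∈ S i := fun x hx => hQS x (hsub hx)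
  obtain ⟨P, hP⟩ := Function.ne_iff.1 hc0
  exact hnot fun x hx => eval_ne_zero_of_mem_box S f hdeg hfS P hP x (hQS x hx)

end
end
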